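/- Let T be a self-adjoint operator on a Hilbert space H, let λ be an isolated eigenvalue of finite multiplicity of T, and let a < λ < b be such that [a,b] ∩ Spec(T) = {λ}. Let 𝔅 be an orthonormal basis of ker(T−λ) and let (𝓛_n) ∈ Λ(T) be a sequence of finite-dimensional subspaces with dist_T[𝔅,𝓛_n] = ε_n → 0. Define τ_n⁺ = max_{0≠u∈𝓛_n} ⟨(T−a)u,u⟩/‖(T−a)u‖² and τ_n⁻ = min_{0≠u∈𝓛_n} ⟨(T−b)u,u⟩/‖(T−b)u‖². Then for all sufficiently large n: b + 1/τ_n⁻ ≤ λ ≤ a + 1/τ_n⁺, and (a + 1/τ_n⁺) − (b + 1/τ_n⁻) = O(ε_n²). -/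

import Mathlib

/-!
Write `d = lam - s` with `s = a` or `s = b`. Both bounds are statements about `ρ = d * τ`, where
`τ` is the extremal inverse residual at `s`: the enclosure end point is `s + d / ρ`.

Since the spectrum misses the segment from `s` to `lam` except for `lam`, the resolvent
`R = (T - s)⁻¹` satisfies `d R ≤ 1`. Evaluating this at `(T - s) u` gives `ρ ≤ 1`, hence the
enclosure.

Conversely, let `φ` be a unit eigenvector and `v` a trial vector. Then
`‖(T - s) v‖² - d ⟨(T - s) v, v⟩ = ⟨(T - s) v, (T - lam) v⟩`, and the right-hand side does not
change when `v` is replaced by `φ - v`, so it is quadratic in the graph norm of `φ - v`. As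
`‖(T - s) v‖` is close to `|d|`, dividing by its square gives `1 - ρ = O(ε²)`.
-/

open Filter Topology
open scoped ComplexInnerProductSpace

/-- A (possibly unbounded, densely defined) linear operator from `E` to `F`,
encoded by its domain together with a total function that is linear on the domain. -/
structure PMap (E F : Type*) [NormedAddCommGroup E] [InnerProductSpace ℂ E]
    [NormedAddCommGroup F] [InnerProductSpace ℂ F] : Type _ where
  dom : Submodule ℂ E
  toFun : E → F
  map_add' : ∀ x ∈ dom, ∀ y ∈ dom, toFun (x + y) = toFun x + toFun y
  map_smul' : ∀ (c : ℂ), ∀ x ∈ dom, toFun (c • x) = c • toFun x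

namespace PMap

variable {E F : Type*} [NormedAddCommGroup E] [InnerProductSpace ℂ E]
  [NormedAddCommGroup F] [InnerProductSpace ℂ F]

/-- `T` is self-adjoint : it is densely defined and the adjoint relation
`⟪T x, y⟫ = ⟪x, z⟫` (for all `x` in the domain) holds iff `y` is in the domain
and `z = T y`. -/
def IsSelfAdjoint (T : PMap E E) : Prop :=
  Dense (T.dom : Set E) ∧
    ∀ y z : E, (∀ x ∈ T.dom, ⟪T.toFun x, y⟫ = ⟪x, z⟫) ↔ y ∈ T.dom ∧ z = T.toFun y

/-- The resolvent set : points `z` where `T - z` has an everywhere defined bounded inverse. -/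
def resolventSet (T : PMap E E) : Set ℂ :=
  {z | ∃ R : E →L[ℂ] E, (∀ x ∈ T.dom, R (T.toFun x - z • x) = x) ∧
      ∀ y : E, R y ∈ T.dom ∧ T.toFun (R y) - z • R y = y}

/-- The spectrum of `T`. -/
def spec (T : PMap E E) : Set ℂ := {z | z ∉ T.resolventSet}

/-- The real points of the spectrum of `T`. -/
def specR (T : PMap E E) : Set ℝ := {t : ℝ | (t : ℂ) ∈ T.spec}

/-- The (real) essential spectrum of `T`, via singular Weyl sequences. -/
def specEssR (T : PMap E E) : Set ℝ :=
  {t : ℝ | ∃ f : ℕ → E, (∀ n, f n ∈ T.dom) ∧ (∀ n, ‖f n‖ = 1) ∧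
      (∀ y : E, Tendsto (fun n => ⟪y, f n⟫) atTop (𝓝 0)) ∧
      Tendsto (fun n => ‖T.toFun (f n) - (t : ℂ) • f n‖) atTop (𝓝 0)}

/-- The eigenspace `ker (T - t)`. -/
def eigSp (T : PMap E E) (t : ℝ) : Submodule ℂ E where
  carrier := {x | x ∈ T.dom ∧ T.toFun x = (t : ℂ) • x}
  add_mem' := by
    rintro a b ⟨ha1, ha2⟩ ⟨hb1, hb2⟩
    exact ⟨T.dom.add_mem ha1 hb1, by rw [T.map_add' a ha1 b hb1, ha2, hb2, smul_add]⟩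
  zero_mem' := by
    refine ⟨T.dom.zero_mem, ?_⟩
    have h := T.map_smul' 0 0 T.dom.zero_mem
    simpa using h
  smul_mem' := by
    rintro c x ⟨hx1, hx2⟩
    refine ⟨T.dom.smul_mem c hx1, ?_⟩
    rw [T.map_smul' c x hx1, hx2]
    exact smul_comm c ((t : ℂ)) x

/-- The distance from `u` to the set `L` in the graph norm of `T`. -/
noncomputable def gdist (T : PMap E E) (u : E) (L : Set E) : ℝ :=
  sInf {r | ∃ v ∈ L, r = Real.sqrt (‖u - v‖ ^ 2 + ‖T.toFun u - T.toFun v‖ ^ 2)}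

end PMap

namespace PMap

variable {E : Type*} [NormedAddCommGroup E] [InnerProductSpace ℂ E]

/-- The inverse residual `⟨(T−s)u,u⟩/‖(T−s)u‖²`. -/
noncomputable def invRes (T : PMap E E) (s : ℝ) (u : E) : ℝ :=
  (⟪T.toFun u - (s : ℂ) • u, u⟫).re / ‖T.toFun u - (s : ℂ) • u‖ ^ 2

end PMap

lemma one_div_mem_Icc_of_one_sub_le {x ρ : ℝ} (hx0 : 0 ≤ x) (hx : x ≤ 1 / 2) (hxρ : 1 - x ≤ ρ)
    (hρ : ρ ≤ 1) : 1 / ρ ∈ Set.Icc 1 (1 + 2 * x) := by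
  have hρ0 : 0 < ρ := by linarith
  refine ⟨one_le_one_div hρ0 hρ, (div_le_iff₀ hρ0).2 ?_⟩
  calc 1 ≤ (1 + 2 * x) * (1 - x) := by nlinarith
    _ ≤ (1 + 2 * x) * ρ := by gcongr

namespace PMap

instance {E F : Type*} [NormedAddCommGroup E] [InnerProductSpace ℂ E]
    [NormedAddCommGroup F] [InnerProductSpace ℂ F] : CoeFun (PMap E F) fun _ => E → F :=
  ⟨toFun⟩

section GraphNorm

variable {E F : Type*} [NormedAddCommGroup E] [InnerProductSpace ℂ E]
  [NormedAddCommGroup F] [InnerProductSpace ℂ F]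

lemma map_sub (T : PMap E F) {x y : E} (hx : x ∈ T.dom) (hy : y ∈ T.dom) :
    T (x - y) = T x - T y := by
  have h := T.map_add' x hx _ (T.dom.smul_mem (-1) hy)
  rwa [T.map_smul' _ y hy, neg_one_smul, neg_one_smul, ← sub_eq_add_neg, ← sub_eq_add_neg] at h

lemma map_zero (T : PMap E F) : T 0 = 0 := by
  simpa using T.map_smul' 0 0 T.dom.zero_mem

/-- The graph norm of a partially defined operator, meaningful on its domain. -/
noncomputable def graphNorm (T : PMap E F) (u : E) : ℝ :=
  √(‖u‖ ^ 2 + ‖T u‖ ^ 2)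

lemma graphNorm_nonneg (T : PMap E F) (u : E) : 0 ≤ T.graphNorm u :=
  Real.sqrt_nonneg _

lemma norm_le_graphNorm (T : PMap E F) (u : E) : ‖u‖ ≤ T.graphNorm u :=
  Real.le_sqrt_of_sq_le (le_add_of_nonneg_right (sq_nonneg _))

lemma norm_apply_le_graphNorm (T : PMap E F) (u : E) : ‖T u‖ ≤ T.graphNorm u :=
  Real.le_sqrt_of_sq_le (le_add_of_nonneg_left (sq_nonneg _))

lemma gdist_nonneg (T : PMap E E) (u : E) (L : Set E) : 0 ≤ T.gdist u L := by
  refine Real.sInf_nonneg ?_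
  rintro _ ⟨v, -, rfl⟩
  exact Real.sqrt_nonneg _

lemma exists_graphNorm_sub_lt {T : PMap E E} {u : E} (hu : u ∈ T.dom) {L : Set E}
    (hne : L.Nonempty) (hL : L ⊆ T.dom) {r : ℝ} (h : T.gdist u L < r) :
    ∃ v ∈ L, T.graphNorm (u - v) < r := by
  obtain ⟨v₀, hv₀⟩ := hne
  obtain ⟨_, ⟨v, hv, rfl⟩, hr⟩ := exists_lt_of_csInf_lt (by exact ⟨_, v₀, hv₀, rfl⟩) h
  exact ⟨v, hv, by rwa [graphNorm, T.map_sub hu (hL hv)]⟩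

end GraphNorm

variable {H : Type*} [NormedAddCommGroup H] [InnerProductSpace ℂ H]

section Shift

/-- The shifted operator `T - z`, on the domain of `T`. -/
def shift (T : PMap H H) (z : ℂ) : PMap H H where
  dom := T.dom
  toFun u := T u - z • u
  map_add' x hx y hy := by rw [T.map_add' x hx y hy, smul_add, add_sub_add_comm]
  map_smul' c x hx := by rw [T.map_smul' c x hx, smul_sub, smul_comm]

lemma shift_apply (T : PMap H H) (z : ℂ) (u : H) : T.shift z u = T u - z • u := rfl

lemma shift_apply_eq_add (T : PMap H H) (z w : ℂ) (u : H) :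
    T.shift z u = T.shift w u + (w - z) • u := by
  simp only [shift_apply]
  module

lemma norm_shift_apply_le (T : PMap H H) (z : ℂ) (u : H) :
    ‖T.shift z u‖ ≤ (1 + ‖z‖) * T.graphNorm u :=
  calc ‖T.shift z u‖ ≤ ‖T u‖ + ‖z‖ * ‖u‖ := (norm_sub_le _ _).trans_eq (by rw [norm_smul])
    _ ≤ T.graphNorm u + ‖z‖ * T.graphNorm u := by
      gcongr
      exacts [T.norm_apply_le_graphNorm u, T.norm_le_graphNorm u]
    _ = (1 + ‖z‖) * T.graphNorm u := by ring

lemma shift_apply_of_mem_eigSp {T : PMap H H} {lam : ℝ} {φ : H} (hφ : φ ∈ T.eigSp lam) (z : ℂ) :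
    T.shift z φ = (lam - z) • φ := by
  rw [shift_apply, hφ.2, sub_smul]

/-- Symmetry of a partially defined operator on its domain. -/
def IsSymmetric (T : PMap H H) : Prop :=
  ∀ x ∈ T.dom, ∀ y ∈ T.dom, ⟪T x, y⟫ = ⟪x, T y⟫

lemma IsSelfAdjoint.isSymmetric {T : PMap H H} (hT : T.IsSelfAdjoint) : T.IsSymmetric :=
  fun x hx y hy => (hT.2 y (T y)).2 ⟨hy, rfl⟩ x hx

lemma IsSymmetric.shift {T : PMap H H} (hT : T.IsSymmetric) (s : ℝ) :
    (T.shift s).IsSymmetric := fun x hx y hy => by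
  rw [shift_apply, shift_apply, inner_sub_left, inner_sub_right, hT x hx y hy, inner_smul_left,
    inner_smul_right, Complex.conj_ofReal]

end Shift

section Resolvent

/-- `R` is the resolvent `(T - z)⁻¹`; a point is in `T.resolventSet` iff it has a resolvent. -/
def IsResolvent (T : PMap H H) (z : ℂ) (R : H →L[ℂ] H) : Prop :=
  (∀ x ∈ T.dom, R (T.shift z x) = x) ∧ ∀ y, R y ∈ T.dom ∧ T.shift z (R y) = y

namespace IsResolvent

variable {T : PMap H H} {z w : ℂ} {R Q : H →L[ℂ] H}

/- With `x = Q y`, the second factor maps `y = (T - w) x` to `(T - z) x` and the first maps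
that back to `(T - w) x`. -/
lemma one_sub_mul_one_add (hR : T.IsResolvent z R) (hQ : T.IsResolvent w Q) :
    (1 - (w - z) • R) * (1 + (w - z) • Q) = 1 := by
  ext y
  obtain ⟨hx, hy⟩ := hQ.2 y
  have h_add : (1 + (w - z) • Q) y = T.shift z (Q y) := by
    rw [T.shift_apply_eq_add z w, hy]
    rfl
  have h_sub : (1 - (w - z) • R) (T.shift z (Q y)) = T.shift z (Q y) - (w - z) • Q y := by
    simp [hR.1 _ hx]
  rw [mul_apply_eq_comp, h_add, h_sub, T.shift_apply_eq_add z w, hy, add_sub_cancel_right]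
  rfl

lemma isUnit_one_sub (hR : T.IsResolvent z R) (hw : w ∈ T.resolventSet) :
    IsUnit (1 - (w - z) • R) := by
  obtain ⟨Q, hQ : T.IsResolvent w Q⟩ := hw
  have h_swap : (1 + (w - z) • Q) * (1 - (w - z) • R) = 1 := by
    simpa only [← neg_sub w z, neg_smul, sub_neg_eq_add, ← sub_eq_add_neg]
      using hQ.one_sub_mul_one_add hR
  exact ⟨⟨_, _, hR.one_sub_mul_one_add hQ, h_swap⟩, rfl⟩

lemma isSelfAdjoint [CompleteSpace H] {s : ℝ} (hR : T.IsResolvent s R) (hT : T.IsSymmetric) :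
    _root_.IsSelfAdjoint R :=
  ContinuousLinearMap.isSelfAdjoint_iff_isSymmetric.2 fun x y =>
    calc ⟪R x, y⟫ = ⟪R x, T.shift s (R y)⟫ := by rw [(hR.2 y).2]
      _ = ⟪T.shift s (R x), R y⟫ := (hT.shift s _ (hR.2 x).1 _ (hR.2 y).1).symm
      _ = ⟪x, R y⟫ := by rw [(hR.2 x).2]

end IsResolvent

lemma mem_resolventSet_of_mem_uIcc {T : PMap H H} {s lam t : ℝ}
    (hspec : T.specR ∩ Set.uIcc s lam ⊆ {lam}) (ht : t ∈ Set.uIcc s lam) (hne : t ≠ lam) :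
    (t : ℂ) ∈ T.resolventSet :=
  not_not.1 fun h => hne (hspec ⟨h, ht⟩)

/- For `x > 1`, the operator `x - (lam - s) R` is `x` times `1 - (t - s) R`, where
`t = s + (lam - s) / x` lies between `s` and `lam`. -/
lemma IsResolvent.smul_le_one [CompleteSpace H] {T : PMap H H} (hT : T.IsSymmetric) {s lam : ℝ}
    (hne : s ≠ lam) (hspec : T.specR ∩ Set.uIcc s lam ⊆ {lam}) {R : H →L[ℂ] H}
    (hR : T.IsResolvent s R) : (lam - s) • R ≤ 1 := by
  have h_sa : _root_.IsSelfAdjoint ((lam - s) • R) := .smul (.all _) (hR.isSelfAdjoint hT)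
  rw [← map_one (algebraMap ℝ (H →L[ℂ] H)), le_algebraMap_iff_spectrum_le h_sa]
  intro x hx
  by_contra! hx1
  have hx0 : x ≠ 0 := by positivity
  set t : ℝ := AffineMap.lineMap s lam x⁻¹ with ht
  have ht_mem : t ∈ Set.uIcc s lam := by
    rw [← segment_eq_uIcc]
    exact lineMap_mem_segment ℝ s lam ⟨by positivity, inv_le_one_of_one_le₀ hx1.le⟩
  have ht_ne : t ≠ lam := fun h => by
    rw [ht, AffineMap.lineMap_eq_right_iff, inv_eq_one] at h
    exact h.elim hne hx1.ne'
  have h_unit := hR.isUnit_one_sub (mem_resolventSet_of_mem_uIcc hspec ht_mem ht_ne)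
  have h_smul : algebraMap ℝ (H →L[ℂ] H) x - (lam - s) • R
      = x • (1 - ((t : ℂ) - s) • R) := by
    have h_scalar : x * (t - s) = lam - s := by
      rw [ht, AffineMap.lineMap_apply_ring']
      field_simp
      ring
    rw [← Complex.ofReal_sub, Complex.coe_smul, smul_sub, smul_smul, h_scalar,
      Algebra.algebraMap_eq_smul_one]
  rw [spectrum.mem_iff, h_smul] at hx
  exact hx (h_unit.smul (Units.mk0 x hx0))

lemma IsSymmetric.sub_mul_re_inner_shift_le [CompleteSpace H] {T : PMap H H} (hT : T.IsSymmetric)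
    {s lam : ℝ} (hne : s ≠ lam) (hspec : T.specR ∩ Set.uIcc s lam ⊆ {lam}) {u : H}
    (hu : u ∈ T.dom) : (lam - s) * (⟪T.shift s u, u⟫).re ≤ ‖T.shift s u‖ ^ 2 := by
  obtain ⟨R, hR : T.IsResolvent s R⟩ := mem_resolventSet_of_mem_uIcc hspec Set.left_mem_uIcc hne
  have h_pos := (ContinuousLinearMap.le_def _ _).1 (hR.smul_le_one hT hne hspec)
  have h := h_pos.re_inner_nonneg_right (T.shift s u)
  have h_apply : (1 - (lam - s) • R) (T.shift s u) = T.shift s u - ((lam - s : ℝ) : ℂ) • u := by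
    rw [Complex.coe_smul]
    simp [hR.1 u hu]
  rw [h_apply, inner_sub_right, inner_smul_right, _root_.map_sub, inner_self_eq_norm_sq,
    RCLike.re_to_complex, Complex.re_ofReal_mul] at h
  exact sub_nonneg.1 h

lemma IsSymmetric.sub_mul_invRes_le_one [CompleteSpace H] {T : PMap H H} (hT : T.IsSymmetric)
    {s lam : ℝ} (hne : s ≠ lam) (hspec : T.specR ∩ Set.uIcc s lam ⊆ {lam}) {u : H}
    (hu : u ∈ T.dom) : (lam - s) * T.invRes s u ≤ 1 := by
  rw [invRes, ← mul_div_assoc]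
  exact div_le_one_of_le₀ (hT.sub_mul_re_inner_shift_le hne hspec hu) (sq_nonneg _)

end Resolvent

section TrialVector

variable {T : PMap H H} {s lam : ℝ} {φ v : H}

lemma norm_shift_sq_sub (T : PMap H H) (s lam : ℝ) (v : H) :
    ‖T.shift s v‖ ^ 2 - (lam - s) * (⟪T.shift s v, v⟫).re
      = (⟪T.shift s v, T.shift lam v⟫).re := by
  rw [T.shift_apply_eq_add lam s v, inner_add_right, inner_smul_right, Complex.add_re,
    ← Complex.ofReal_sub, Complex.re_ofReal_mul, ← RCLike.re_to_complex (x := ⟪_, T.shift s v⟫),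
    inner_self_eq_norm_sq]
  ring

lemma IsSymmetric.inner_shift_eigenvector_sub (hT : T.IsSymmetric) (hφ : φ ∈ T.eigSp lam)
    (hv : v ∈ T.dom) (s : ℝ) :
    ⟪T.shift s (φ - v), T.shift lam (φ - v)⟫ = ⟪T.shift s v, T.shift lam v⟫ := by
  have h_zero : T.shift lam φ = 0 := by rw [shift_apply_of_mem_eigSp hφ, sub_self, zero_smul]
  have h_orth : ⟪φ, T.shift lam v⟫ = 0 := by
    rw [← hT.shift lam φ hφ.1 v hv, h_zero, inner_zero_left]
  rw [(T.shift s).map_sub hφ.1 hv, (T.shift lam).map_sub hφ.1 hv, h_zero, zero_sub,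
    inner_neg_right, inner_sub_left, shift_apply_of_mem_eigSp hφ, inner_smul_left, h_orth]
  ring

lemma IsSymmetric.re_inner_shift_le (hT : T.IsSymmetric) (hφ : φ ∈ T.eigSp lam)
    (hv : v ∈ T.dom) (s : ℝ) :
    (⟪T.shift s v, T.shift lam v⟫).re ≤ (1 + |s|) * (1 + |lam|) * T.graphNorm (φ - v) ^ 2 := by
  have h_shift (t : ℝ) : ‖T.shift t (φ - v)‖ ≤ (1 + |t|) * T.graphNorm (φ - v) := by
    simpa using T.norm_shift_apply_le t (φ - v)
  have := T.graphNorm_nonneg (φ - v)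
  calc (⟪T.shift s v, T.shift lam v⟫).re
      = (⟪T.shift s (φ - v), T.shift lam (φ - v)⟫).re := by
        rw [hT.inner_shift_eigenvector_sub hφ hv]
    _ ≤ ‖T.shift s (φ - v)‖ * ‖T.shift lam (φ - v)‖ := re_inner_le_norm (𝕜 := ℂ) _ _
    _ ≤ ((1 + |s|) * T.graphNorm (φ - v)) * ((1 + |lam|) * T.graphNorm (φ - v)) := by
        gcongr
        exacts [h_shift s, h_shift lam]
    _ = (1 + |s|) * (1 + |lam|) * T.graphNorm (φ - v) ^ 2 := by ring

lemma abs_sub_le_norm_shift_add (hφ : φ ∈ T.eigSp lam) (hφ1 : ‖φ‖ = 1) (hv : v ∈ T.dom) (s : ℝ) :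
    |lam - s| ≤ ‖T.shift s v‖ + (1 + |s|) * T.graphNorm (φ - v) :=
  calc |lam - s| = ‖T.shift s φ‖ := by
        rw [shift_apply_of_mem_eigSp hφ, norm_smul, hφ1, mul_one, ← Complex.ofReal_sub,
          Complex.norm_real, Real.norm_eq_abs]
    _ ≤ ‖T.shift s v‖ + ‖T.shift s φ - T.shift s v‖ := norm_le_norm_add_norm_sub' _ _
    _ ≤ ‖T.shift s v‖ + (1 + |s|) * T.graphNorm (φ - v) := by
        rw [← (T.shift s).map_sub hφ.1 hv]
        simpa using T.norm_shift_apply_le s (φ - v)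

lemma half_abs_sub_le_norm_shift (hφ : φ ∈ T.eigSp lam) (hφ1 : ‖φ‖ = 1) (hv : v ∈ T.dom)
    (hclose : T.graphNorm (φ - v) ≤ |lam - s| / (2 * (1 + |s|))) :
    |lam - s| / 2 ≤ ‖T.shift s v‖ := by
  have h_half := abs_sub_le_norm_shift_add hφ hφ1 hv s
  rw [le_div_iff₀ (by positivity)] at hclose
  linarith

lemma IsSymmetric.one_sub_le_sub_mul_invRes (hT : T.IsSymmetric) (hne : s ≠ lam)
    (hφ : φ ∈ T.eigSp lam) (hφ1 : ‖φ‖ = 1) (hv : v ∈ T.dom)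
    (hclose : T.graphNorm (φ - v) ≤ |lam - s| / (2 * (1 + |s|))) :
    1 - (1 + |s|) * (1 + |lam|) / ((lam - s) / 2) ^ 2 * T.graphNorm (φ - v) ^ 2
      ≤ (lam - s) * T.invRes s v := by
  have h_abs : 0 < |lam - s| / 2 := half_pos (abs_pos.2 (sub_ne_zero.2 hne.symm))
  have h_norm := half_abs_sub_le_norm_shift hφ hφ1 hv hclose
  have h_norm_pos : 0 < ‖T.shift s v‖ := h_abs.trans_le h_norm
  have h_sq : ((lam - s) / 2) ^ 2 = (|lam - s| / 2) ^ 2 := by rw [div_pow, div_pow, sq_abs]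
  have h_defect : (lam - s) * T.invRes s v
      = 1 - (⟪T.shift s v, T.shift lam v⟫).re / ‖T.shift s v‖ ^ 2 := by
    rw [← norm_shift_sq_sub, sub_div, div_self (by positivity), sub_sub_cancel, mul_div_assoc]
    rfl
  rw [h_defect, h_sq, div_mul_eq_mul_div]
  gcongr
  exact hT.re_inner_shift_le hφ hv s

end TrialVector

section TrialSubspace

/-- The set of inverse residuals at `s` over the nonzero vectors of a trial subspace, whose
supremum and infimum are the quantities `τ⁺` (for `s = a`) and `τ⁻` (for `s = b`). -/
def invResSet (T : PMap H H) (s : ℝ) (L : Submodule ℂ H) : Set ℝ :=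
  {r | ∃ u ∈ L, u ≠ 0 ∧ r = T.invRes s u}

variable {T : PMap H H} {s lam : ℝ} {φ : H}

lemma IsSymmetric.one_sub_le_of_mem_upperBounds (hT : T.IsSymmetric) (hne : s ≠ lam)
    (hφ : φ ∈ T.eigSp lam) (hφ1 : ‖φ‖ = 1) {L : Submodule ℂ H} (hL : L ≤ T.dom)
    (hclose : T.gdist φ L < |lam - s| / (2 * (1 + |s|))) {ρ : ℝ}
    (hρ : ρ ∈ upperBounds ((fun r => (lam - s) * r) '' T.invResSet s L)) :
    1 - (1 + |s|) * (1 + |lam|) / ((lam - s) / 2) ^ 2 * T.gdist φ L ^ 2 ≤ ρ := by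
  set C := (1 + |s|) * (1 + |lam|) / ((lam - s) / 2) ^ 2
  have h_bound : ∀ δ ∈ Set.Ioo (T.gdist φ L) (|lam - s| / (2 * (1 + |s|))),
      1 - C * δ ^ 2 ≤ ρ := by
    rintro δ ⟨hδ, hδ'⟩
    obtain ⟨v, hvL, hv⟩ := exists_graphNorm_sub_lt hφ.1 ⟨0, L.zero_mem⟩ hL hδ
    have hv_close := (hv.trans hδ').le
    have hv0 : v ≠ 0 := by
      rintro rfl
      have h_norm := half_abs_sub_le_norm_shift hφ hφ1 T.dom.zero_mem hv_close
      rw [(T.shift s).map_zero, norm_zero] at h_norm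
      exact h_norm.not_gt (half_pos (abs_pos.2 (sub_ne_zero.2 hne.symm)))
    have := T.graphNorm_nonneg (φ - v)
    calc 1 - C * δ ^ 2 ≤ 1 - C * T.graphNorm (φ - v) ^ 2 := by gcongr
      _ ≤ (lam - s) * T.invRes s v :=
        hT.one_sub_le_sub_mul_invRes hne hφ hφ1 (hL hvL) hv_close
      _ ≤ ρ := hρ ⟨_, ⟨v, hvL, hv0, rfl⟩, rfl⟩
  have h_lim : Tendsto (fun δ => 1 - C * δ ^ 2) (𝓝[>] T.gdist φ L)
      (𝓝 (1 - C * T.gdist φ L ^ 2)) :=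
    (by fun_prop : Continuous fun δ => 1 - C * δ ^ 2).continuousWithinAt
  exact le_of_tendsto h_lim (eventually_of_mem (Ioo_mem_nhdsGT hclose) h_bound)

lemma IsSymmetric.le_one_of_isLUB [CompleteSpace H] (hT : T.IsSymmetric) (hne : s ≠ lam)
    (hspec : T.specR ∩ Set.uIcc s lam ⊆ {lam}) {L : Submodule ℂ H} (hL : L ≤ T.dom) {ρ : ℝ}
    (hρ : IsLUB ((fun r => (lam - s) * r) '' T.invResSet s L) ρ) : ρ ≤ 1 := by
  refine hρ.2 ?_
  rintro _ ⟨_, ⟨u, hu, -, rfl⟩, rfl⟩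
  exact hT.sub_mul_invRes_le_one hne hspec (hL hu)

lemma IsSymmetric.exists_forall_one_div_mem_Icc [CompleteSpace H] (hT : T.IsSymmetric)
    (hne : s ≠ lam) (hspec : T.specR ∩ Set.uIcc s lam ⊆ {lam}) (hφ : φ ∈ T.eigSp lam)
    (hφ1 : ‖φ‖ = 1) :
    ∃ C ≥ 0, ∃ δ > 0, ∀ L ≤ T.dom, T.gdist φ L < δ → ∀ ρ : ℝ,
      IsLUB ((fun r => (lam - s) * r) '' T.invResSet s L) ρ →
        1 / ρ ∈ Set.Icc 1 (1 + C * T.gdist φ L ^ 2) := by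
  have : 0 < |lam - s| := abs_pos.2 (sub_ne_zero.2 hne.symm)
  set K := (1 + |s|) * (1 + |lam|) / ((lam - s) / 2) ^ 2
  have h_small : ∀ᶠ δ in 𝓝[>] (0 : ℝ), K * δ ^ 2 < 1 / 2 :=
    (by fun_prop : Continuous fun δ : ℝ => K * δ ^ 2).continuousWithinAt.eventually_lt_const
      (by norm_num)
  obtain ⟨δ, hδK, hδ0, hδ⟩ := (h_small.and (Ioo_mem_nhdsGT
    (show 0 < |lam - s| / (2 * (1 + |s|)) by positivity))).exists
  refine ⟨2 * K, by positivity, δ, hδ0, fun L hL hclose ρ hρ => ?_⟩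
  have h_nonneg := T.gdist_nonneg φ L
  have h_half : K * T.gdist φ L ^ 2 ≤ 1 / 2 :=
    le_trans (by gcongr) hδK.le
  rw [mul_assoc]
  exact one_div_mem_Icc_of_one_sub_le (by positivity) h_half
    (hT.one_sub_le_of_mem_upperBounds hne hφ hφ1 hL (hclose.trans hδ) hρ.1)
    (hT.le_one_of_isLUB hne hspec hL hρ)

end TrialSubspace

end PMap

theorem statement1_general {H : Type*} [NormedAddCommGroup H] [InnerProductSpace ℂ H]
    [CompleteSpace H] {T : PMap H H} (hT : T.IsSymmetric) {a b lam : ℝ} (halam : a < lam)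
    (hlamb : lam < b) (hspec : T.specR ∩ Set.Icc a b ⊆ {lam}) {φ : H} (hφ : φ ∈ T.eigSp lam)
    (hφ1 : ‖φ‖ = 1) :
    ∃ C ≥ 0, ∃ δ > 0, ∀ L ≤ T.dom, T.gdist φ L < δ → ∀ τp τm : ℝ,
      IsLUB (T.invResSet a L) τp → IsGLB (T.invResSet b L) τm →
        b + 1 / τm ≤ lam ∧ lam ≤ a + 1 / τp ∧
          (a + 1 / τp) - (b + 1 / τm) ≤ C * T.gdist φ L ^ 2 := by
  have hda : 0 < lam - a := sub_pos.2 halam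
  have hdb : lam - b < 0 := sub_neg.2 hlamb
  have hab : a ≤ b := (halam.trans hlamb).le
  have hspec_uIcc : ∀ s ∈ Set.Icc a b, T.specR ∩ Set.uIcc s lam ⊆ {lam} := fun s hs =>
    (Set.inter_subset_inter_right _ (Set.uIcc_subset_Icc hs ⟨halam.le, hlamb.le⟩)).trans hspec
  obtain ⟨Ca, hCa, δa, hδa, ha⟩ := hT.exists_forall_one_div_mem_Icc halam.ne
    (hspec_uIcc a (Set.left_mem_Icc.2 hab)) hφ hφ1
  obtain ⟨Cb, hCb, δb, hδb, hb⟩ := hT.exists_forall_one_div_mem_Icc hlamb.ne'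
    (hspec_uIcc b (Set.right_mem_Icc.2 hab)) hφ hφ1
  refine ⟨(lam - a) * Ca + (b - lam) * Cb, by nlinarith, min δa δb, lt_min hδa hδb,
    fun L hL hclose τp τm hτp hτm => ?_⟩
  obtain ⟨hp, hp'⟩ := ha L hL (hclose.trans_le (min_le_left _ _)) _ (hτp.mul_left hda.le)
  have hτm_mul : IsLUB ((fun r => (lam - b) * r) '' T.invResSet b L) ((lam - b) * τm) :=
    (OrderIso.smulRightDual ℝ hdb).isGLB_image'.2 hτm
  obtain ⟨hm, hm'⟩ := hb L hL (hclose.trans_le (min_le_right _ _)) _ hτm_mul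
  have h_scale {d : ℝ} (hd : d ≠ 0) (τ : ℝ) : 1 / τ = d * (1 / (d * τ)) := by field_simp
  rw [h_scale hda.ne' τp, h_scale hdb.ne τm]
  refine ⟨by nlinarith, by nlinarith, by nlinarith⟩

/-- Lemma 3.2 of the paper, convergence of the Zimmermann–Mertins
enclosures.  Let `lam` be an isolated eigenvalue of finite multiplicity of the
self-adjoint operator `T`, with `[a,b] ∩ Spec T = {lam}`, `a < lam < b`.  Let `𝔅 = φ`
be an orthonormal basis of `ker (T − lam)` and let `(L n)` be a sequence of
finite-dimensional trial subspaces of `Dom T`, dense in the graph norm (`Λ(T)`), with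
`dist_T[𝔅, L n] = ε n → 0`.  Then eventually the Zimmermann–Mertins bounds hold and
the length of the enclosure is `O(ε n ^ 2)`. -/
theorem statement1
    {H : Type*} [NormedAddCommGroup H] [InnerProductSpace ℂ H] [CompleteSpace H]
    (T : PMap H H) (hT : T.IsSelfAdjoint)
    (a b lam : ℝ) (halam : a < lam) (hlamb : lam < b)
    (hspec : T.specR ∩ Set.Icc a b = {lam})
    -- `lam` is an eigenvalue (point of the discrete spectrum) of finite multiplicity `k`
    (k : ℕ) (hk : 0 < k)
    (φ : Fin k → H) (hON : Orthonormal ℂ φ)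
    (hφmem : ∀ j, φ j ∈ T.eigSp lam)
    (hφbasis : T.eigSp lam = Submodule.span ℂ (Set.range φ))
    -- the trial subspaces: finite-dimensional, contained in `Dom T`, and `(L n) ∈ Λ(T)`
    (L : ℕ → Submodule ℂ H) (hLdom : ∀ n, (L n : Set H) ⊆ T.dom)
    (hLfin : ∀ n, FiniteDimensional ℂ (L n))
    (hΛ : ∀ u ∈ T.dom, Tendsto (fun n => T.gdist u (L n)) atTop (𝓝 0))
    -- `ε n = dist_T[𝔅, L n] → 0`
    (ε : ℕ → ℝ) (hε : ∀ n, ε n = ⨆ j : Fin k, T.gdist (φ j) (L n))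
    (hε0 : Tendsto ε atTop (𝓝 0))
    -- the inverse residuals over `L n`
    (τp τm : ℕ → ℝ)
    (hτp : ∀ n, IsGreatest {r : ℝ | ∃ u ∈ L n, u ≠ 0 ∧ r = T.invRes a u} (τp n))
    (hτm : ∀ n, IsLeast {r : ℝ | ∃ u ∈ L n, u ≠ 0 ∧ r = T.invRes b u} (τm n)) :
    ∃ (N : ℕ) (C : ℝ), ∀ n ≥ N,
      b + 1 / τm n ≤ lam ∧ lam ≤ a + 1 / τp n ∧
      (a + 1 / τp n) - (b + 1 / τm n) ≤ C * ε n ^ 2 := by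
  obtain ⟨C, hC, δ, hδ, h⟩ :=
    statement1_general hT.isSymmetric halam hlamb hspec.subset (hφmem ⟨0, hk⟩) (hON.1 ⟨0, hk⟩)
  obtain ⟨N, hN⟩ := eventually_atTop.1 (hε0.eventually_lt_const hδ)
  refine ⟨N, C, fun n hn => ?_⟩
  have hφε : T.gdist (φ ⟨0, hk⟩) (L n) ≤ ε n :=
    (hε n).symm ▸ le_ciSup (f := fun j => T.gdist (φ j) (L n)) (Set.finite_range _).bddAbove _
  obtain ⟨hm, hp, hlen⟩ := h (L n) (hLdom n) (hφε.trans_lt (hN n hn)) (τp n) (τm n)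
    (hτp n).isLUB (hτm n).isGLB
  have := T.gdist_nonneg (φ ⟨0, hk⟩) (L n)
  exact ⟨hm, hp, hlen.trans (by gcongr)⟩
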